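/- Let 0 < p₁ < p₂ and let A = [[0, 1], [−p₁p₂, −(p₁+p₂)]] be the companion matrix of (s+p₁)(s+p₂). Then the minimum of ‖S‖∞·‖S⁻¹‖∞ over all invertible 2×2 matrices S such that S⁻¹AS is diagonal equals (p₁ + p₂ + 2·max(1, p₁p₂)) / (p₂ − p₁). -/

import Mathlib

open Matrix

/-- The matrix norm induced by the vector `∞`-norm: the maximum absolute row sum. -/
noncomputable def mNorm {ι κ : Type*} [Fintype ι] [Fintype κ] (M : Matrix ι κ ℝ) : ℝ :=
  ⨆ i, ∑ j, |M i j|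

theorem mNorm_two (M : Matrix (Fin 2) (Fin 2) ℝ) :
    mNorm M = max (|M 0 0| + |M 0 1|) (|M 1 0| + |M 1 1|) := by
  unfold mNorm
  apply le_antisymm
  · apply ciSup_le
    intro i
    fin_cases i
    · simp [Fin.sum_univ_two]
    · simp [Fin.sum_univ_two]
  · have hb : BddAbove (Set.range fun i => ∑ j, |M i j|) := Set.finite_range _ |>.bddAbove
    apply max_le
    · simpa [Fin.sum_univ_two] using le_ciSup hb 0
    · simpa [Fin.sum_univ_two] using le_ciSup hb 1

/-- A row of the inverse: lower bound on `N`. -/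
theorem row_bound (p q a b t u N : ℝ) (hq : 0 < q) (hb : b ≠ 0)
    (h1 : t * a + u * (-p * a) = 1) (h2 : t * b + u * (-q * b) = 0)
    (hN : |t| + |u| ≤ N) : q + 1 ≤ N * (|a| * |q - p|) := by
  have ht : t = q * u := by
    have : b * (t - q * u) = 0 := by linarith
    rcases mul_eq_zero.mp this with h | h
    · exact absurd h hb
    · linarith
  have h3 : u * (a * (q - p)) = 1 := by rw [ht] at h1; linarith
  have h4 : |u| * (|a| * |q - p|) = 1 := by rw [← abs_mul, ← abs_mul, h3, abs_one]
  have h5 : |t| = q * |u| := by rw [ht, abs_mul, abs_of_pos hq]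
  calc q + 1 = (|t| + |u|) * (|a| * |q - p|) := by
        rw [h5]; linear_combination (-(q + 1)) * h4
    _ ≤ _ := by gcongr

theorem combine (p q x y d m N : ℝ) (hp : 0 < p) (hq : 0 < q) (hN : 0 ≤ N)
    (hd : 0 < d)
    (h1 : x + y ≤ m) (h2 : p * x + q * y ≤ m)
    (hx : q + 1 ≤ N * (x * d)) (hy : p + 1 ≤ N * (y * d)) :
    (p + q + 2 * max 1 (p * q)) / d ≤ m * N := by
  rw [div_le_iff₀ hd]
  have e1 := mul_le_mul_of_nonneg_left h1 (mul_nonneg hN hd.le)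
  have e2 := mul_le_mul_of_nonneg_left h2 (mul_nonneg hN hd.le)
  have e3 := mul_le_mul_of_nonneg_left hx hp.le
  have e4 := mul_le_mul_of_nonneg_left hy hq.le
  rcases max_cases 1 (p * q) with ⟨h, _⟩ | ⟨h, _⟩ <;> rw [h] <;> linarith

/-- An eigenvector column. -/
theorem eig_col (p q a c l : ℝ) (h1 : c = a * l)
    (h2 : -(p * q) * a + -(p + q) * c = c * l) (h0 : a ≠ 0) :
    c = -p * a ∨ c = -q * a := by
  have : a * ((l + p) * (l + q)) = 0 := by rw [h1] at h2; linarith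
  rcases mul_eq_zero.mp this with h | h
  · exact absurd h h0
  rcases mul_eq_zero.mp h with h | h
  · left; rw [h1]; linear_combination a * h
  · right; rw [h1]; linear_combination a * h

/-- Example 1: for `0 < p₁ < p₂` and `A = [[0, 1], [-p₁ p₂, -(p₁ + p₂)]]` the
companion matrix of `(s+p₁)(s+p₂)`, the minimum of `‖S‖_∞ ‖S⁻¹‖_∞` over all
invertible `S` with `S⁻¹ A S` diagonal equals
`(p₁ + p₂ + 2 max (1, p₁ p₂)) / (p₂ - p₁)`. -/
theorem second_order_min_condition_number
    (p₁ p₂ : ℝ) (hp₁ : 0 < p₁) (hp₁₂ : p₁ < p₂)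
    (A : Matrix (Fin 2) (Fin 2) ℝ)
    (hA : A = !![0, 1; -(p₁ * p₂), -(p₁ + p₂)]) :
    IsLeast {c : ℝ | ∃ S : Matrix (Fin 2) (Fin 2) ℝ,
        IsUnit S ∧ (S⁻¹ * A * S).IsDiag ∧ c = mNorm S * mNorm S⁻¹}
      ((p₁ + p₂ + 2 * max 1 (p₁ * p₂)) / (p₂ - p₁)) := by
  subst hA
  have hp₂ : 0 < p₂ := hp₁.trans hp₁₂
  have hd : 0 < p₂ - p₁ := sub_pos.mpr hp₁₂
  constructor
  · let S : Matrix (Fin 2) (Fin 2) ℝ :=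
      !![p₂ + 1, p₁ + 1; -p₁ * (p₂ + 1), -p₂ * (p₁ + 1)]
    let T : Matrix (Fin 2) (Fin 2) ℝ :=
      !![p₂ / ((p₂ + 1) * (p₂ - p₁)), 1 / ((p₂ + 1) * (p₂ - p₁));
        -p₁ / ((p₁ + 1) * (p₂ - p₁)), -1 / ((p₁ + 1) * (p₂ - p₁))]
    have n1 : p₂ + 1 ≠ 0 := by positivity
    have n2 : p₁ + 1 ≠ 0 := by positivity
    have n3 : p₂ - p₁ ≠ 0 := hd.ne'
    have hTS : T * S = 1 := by
      ext i j
      fin_cases i <;> fin_cases j <;>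
        simp [T, S, Matrix.mul_apply, Fin.sum_univ_two] <;> field_simp <;> ring
    have hinv : S⁻¹ = T := Matrix.inv_eq_left_inv hTS
    refine ⟨S, ?_, ?_, ?_⟩
    · exact IsUnit.of_mul_eq_one_right T hTS
    · rw [hinv]
      intro i j hij
      fin_cases i <;> fin_cases j <;>
        simp [T, S, Matrix.mul_apply, Fin.sum_univ_two] at hij ⊢ <;> field_simp <;> ring
    · rw [hinv, mNorm_two, mNorm_two]
      have a1 : |S 0 0| + |S 0 1| = p₁ + p₂ + 2 * 1 := by
        simp only [S, Matrix.of_apply, Matrix.cons_val', Matrix.cons_val_zero,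
          Matrix.cons_val_one, Matrix.cons_val_fin_one]
        rw [abs_of_pos (by positivity), abs_of_pos (by positivity)]; ring
      have a2 : |S 1 0| + |S 1 1| = p₁ + p₂ + 2 * (p₁ * p₂) := by
        simp only [S, Matrix.of_apply, Matrix.cons_val', Matrix.cons_val_zero,
          Matrix.cons_val_one, Matrix.cons_val_fin_one, neg_mul, abs_neg]
        rw [abs_of_pos (by positivity), abs_of_pos (by positivity)]; ring
      have a3 : |T 0 0| + |T 0 1| = 1 / (p₂ - p₁) := by
        simp only [T, Matrix.of_apply, Matrix.cons_val', Matrix.cons_val_zero,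
          Matrix.cons_val_one, Matrix.cons_val_fin_one]
        rw [abs_of_pos (by positivity), abs_of_pos (by positivity)]; field_simp
      have a4 : |T 1 0| + |T 1 1| = 1 / (p₂ - p₁) := by
        simp only [T, Matrix.of_apply, Matrix.cons_val', Matrix.cons_val_zero,
          Matrix.cons_val_one, Matrix.cons_val_fin_one, neg_div, abs_neg]
        rw [abs_of_pos (by positivity), abs_of_pos (by positivity)]; field_simp
      rw [a1, a2, a3, a4, max_self, max_add_add_left,
        ← mul_max_of_nonneg _ _ (by norm_num : (0 : ℝ) ≤ 2)]
      ring
  · rintro c ⟨S, hS, hD, rfl⟩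
    have hdet : IsUnit S.det := (Matrix.isUnit_iff_isUnit_det S).mp hS
    have hTS : S⁻¹ * S = 1 := Matrix.nonsing_inv_mul S hdet
    have hST : S * S⁻¹ = 1 := Matrix.mul_nonsing_inv S hdet
    have hdet0 : S 0 0 * S 1 1 - S 0 1 * S 1 0 ≠ 0 := by
      rw [← Matrix.det_fin_two]; exact hdet.ne_zero
    rw [mNorm_two, mNorm_two]
    generalize S⁻¹ = T at *
    obtain ⟨D, hDdef⟩ : ∃ D, D = T * !![0, 1; -(p₁ * p₂), -(p₁ + p₂)] * S := ⟨_, rfl⟩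
    rw [← hDdef] at hD
    have hAS : !![0, 1; -(p₁ * p₂), -(p₁ + p₂)] * S = S * D := by
      rw [hDdef, Matrix.mul_assoc, ← Matrix.mul_assoc S T, hST, Matrix.one_mul]
    have d01 : D 0 1 = 0 := hD (by decide)
    have d10 : D 1 0 = 0 := hD (by decide)
    have e00 := congrFun (congrFun hAS 0) 0
    have e01 := congrFun (congrFun hAS 0) 1
    have e10 := congrFun (congrFun hAS 1) 0
    have e11 := congrFun (congrFun hAS 1) 1
    have f00 := congrFun (congrFun hTS 0) 0
    have f01 := congrFun (congrFun hTS 0) 1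
    have f10 := congrFun (congrFun hTS 1) 0
    have f11 := congrFun (congrFun hTS 1) 1
    rw [Matrix.mul_apply, Matrix.mul_apply, Fin.sum_univ_two, Fin.sum_univ_two] at e00 e01 e10 e11
    rw [Matrix.mul_apply, Fin.sum_univ_two] at f00 f01 f10 f11
    simp only [d01, d10, Matrix.of_apply, Matrix.cons_val', Matrix.cons_val_zero,
      Matrix.cons_val_one, Matrix.cons_val_fin_one, zero_mul, mul_zero, one_mul, zero_add,
      add_zero] at e00 e01 e10 e11
    rw [Matrix.one_apply_eq] at f00 f11
    rw [Matrix.one_apply_ne (by decide)] at f01 f10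
    have ha : S 0 0 ≠ 0 := by
      intro h
      rw [h, zero_mul] at e00
      exact hdet0 (by rw [h, e00]; ring)
    have hb : S 0 1 ≠ 0 := by
      intro h
      rw [h, zero_mul] at e01
      exact hdet0 (by rw [h, e01]; ring)
    have hc := eig_col p₁ p₂ _ _ _ e00 e10 ha
    have he := eig_col p₁ p₂ _ _ _ e01 e11 hb
    have hN0 := le_max_left (|T 0 0| + |T 0 1|) (|T 1 0| + |T 1 1|)
    have hN1 := le_max_right (|T 0 0| + |T 0 1|) (|T 1 0| + |T 1 1|)
    have hm0 := le_max_left (|S 0 0| + |S 0 1|) (|S 1 0| + |S 1 1|)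
    have hm1 := le_max_right (|S 0 0| + |S 0 1|) (|S 1 0| + |S 1 1|)
    generalize max (|T 0 0| + |T 0 1|) (|T 1 0| + |T 1 1|) = N at *
    generalize max (|S 0 0| + |S 0 1|) (|S 1 0| + |S 1 1|) = m at *
    have hN : 0 ≤ N := le_trans (by positivity) hN0
    have hd1 : |p₂ - p₁| = p₂ - p₁ := abs_of_pos hd
    have hd2 : |p₁ - p₂| = p₂ - p₁ := by rw [abs_sub_comm, hd1]
    rcases hc with hc | hc <;> rcases he with he | he
    · exact absurd (by rw [hc, he]; ring) hdet0
    · rw [hc] at f00 f10 hm1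
      rw [he] at f01 f11 hm1
      have r0 := row_bound p₁ p₂ _ _ _ _ N hp₂ hb f00 f01 hN0
      have r1 := row_bound p₂ p₁ _ _ _ _ N hp₁ ha f11 f10 hN1
      rw [hd1] at r0
      rw [hd2] at r1
      rw [abs_mul, abs_mul, abs_neg, abs_neg, abs_of_pos hp₁, abs_of_pos hp₂] at hm1
      exact combine p₁ p₂ _ _ _ m N hp₁ hp₂ hN hd hm0 hm1 r0 r1
    · rw [hc] at f00 f10 hm1
      rw [he] at f01 f11 hm1
      have r0 := row_bound p₂ p₁ _ _ _ _ N hp₁ hb f00 f01 hN0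
      have r1 := row_bound p₁ p₂ _ _ _ _ N hp₂ ha f11 f10 hN1
      rw [hd2] at r0
      rw [hd1] at r1
      rw [abs_mul, abs_mul, abs_neg, abs_neg, abs_of_pos hp₁, abs_of_pos hp₂] at hm1
      rw [add_comm] at hm0 hm1
      exact combine p₁ p₂ _ _ _ m N hp₁ hp₂ hN hd hm0 hm1 r1 r0
    · exact absurd (by rw [hc, he]; ring) hdet0
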